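/- Let x : ℕ → ℝ satisfy ∑_{k=0}^{n} \binom{n}{k}(-1)^k x_k = -x_n for every n. Define y : ℕ → ℝ by y_n = 2 x_{n+1} - x_n. Then ∑_{k=0}^{n} \binom{n}{k}(-1)^k y_k = y_n for every n. -/

import Mathlib

/-!
The inverse invariant sequences of the first kind are the `-1`-eigenvectors of the alternating
binomial transform `T`, and the invariant ones are its fixed points. Pascal's rule says
`T x (n + 1) = T x n - T (S x) n` for the shift `S = J(0)`, that is, `T S = (1 - S) T`. Hence
`T J(a) = -J(b) T` whenever `a + b = -1`: moving `T` across interchanges `J(-1)` and `J(0)` up to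
sign, so `T` anticommutes with `J(-1) + J(0)`, which therefore maps the `-1`-eigenspace of `T`
to the `1`-eigenspace.
-/

section BinomialTransform

variable {R M : Type*} [CommRing R] [AddCommGroup M] [Module R M]

variable (R) in
/-- The alternating binomial transform `x ↦ (∑ k ≤ n, (n choose k) (-1) ^ k x k)ₙ` on sequences,
whose fixed points are the invariant sequences of the first kind. -/
def binomialTransform : Module.End R (ℕ → M) :=
  LinearMap.pi fun n ↦
    ∑ k ∈ Finset.range (n + 1), ((n.choose k : R) * (-1) ^ k) • LinearMap.proj k

/-- The infinite Jordan block `J(c)`, with `c` on the diagonal and `1` on the superdiagonal,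
encoded by its action on sequences rather than as a matrix. -/
def jordanBlock (c : R) : Module.End R (ℕ → M) :=
  c • 1 + LinearMap.funLeft R M (· + 1)

theorem binomialTransform_apply (x : ℕ → M) (n : ℕ) :
    binomialTransform R x n =
      ∑ k ∈ Finset.range (n + 1), ((n.choose k : R) * (-1) ^ k) • x k := by
  simp [binomialTransform]

theorem jordanBlock_apply (c : R) (x : ℕ → M) (n : ℕ) :
    jordanBlock c x n = c • x n + x (n + 1) :=
  rfl

theorem binomialTransform_apply_succ (x : ℕ → M) (n : ℕ) :
    binomialTransform R x (n + 1) =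
      binomialTransform R x n - binomialTransform R (fun k ↦ x (k + 1)) n := by
  have pascal := Finset.sum_choose_succ_nsmul (fun k _ ↦ (-1 : R) ^ k • x k) n
  simp only [← Nat.cast_smul_eq_nsmul R, smul_smul] at pascal
  simp only [binomialTransform_apply, pascal, pow_succ, mul_neg, mul_one, neg_smul,
    Finset.sum_neg_distrib, sub_eq_add_neg]

theorem binomialTransform_mul_jordanBlock {a b : R} (hab : a + b = -1) :
    binomialTransform R * jordanBlock a =
      -(jordanBlock b * binomialTransform (M := M) R) := by
  obtain rfl : b = -1 - a := eq_sub_of_add_eq' hab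
  ext1 x
  funext n
  have split : jordanBlock a x = a • x + fun k ↦ x (k + 1) := rfl
  simp only [Module.End.mul_apply, LinearMap.neg_apply, Pi.neg_apply, split, map_add, map_smul,
    Pi.add_apply, Pi.smul_apply, jordanBlock_apply, binomialTransform_apply_succ]
  module

theorem binomialTransform_mul_jordanBlock_add_jordanBlock {a b : R} (hab : a + b = -1) :
    binomialTransform R * (jordanBlock a + jordanBlock b) =
      -((jordanBlock a + jordanBlock b) * binomialTransform (M := M) R) := by
  rw [mul_add, binomialTransform_mul_jordanBlock hab,
    binomialTransform_mul_jordanBlock (add_comm a b ▸ hab), add_mul, neg_add_rev]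

theorem stmt13_general (x : ℕ → M)
    (hx : ∀ n, ∑ k ∈ Finset.range (n + 1), ((n.choose k : R) * (-1) ^ k) • x k = -x n)
    (y : ℕ → M) (hy : ∀ n, y n = (2 : R) • x (n + 1) - x n) (n : ℕ) :
    ∑ k ∈ Finset.range (n + 1), ((n.choose k : R) * (-1) ^ k) • y k = y n := by
  let T : Module.End R (ℕ → M) := binomialTransform R
  let J : Module.End R (ℕ → M) := jordanBlock (-1) + jordanBlock 0
  have anticomm : T * J = -(J * T) :=
    binomialTransform_mul_jordanBlock_add_jordanBlock (add_zero (-1))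
  have Tx_eq : T x = -x :=
    funext fun n ↦ (binomialTransform_apply x n).trans (hx n)
  have y_eq : y = J x := by
    funext n
    simp only [hy, J, LinearMap.add_apply, Pi.add_apply, jordanBlock_apply]
    module
  have Ty_eq : T y = y :=
    calc T y = (T * J) x := congrArg T y_eq
      _ = -J (T x) := LinearMap.congr_fun anticomm x
      _ = y := by rw [Tx_eq, map_neg, neg_neg, y_eq]
  exact (binomialTransform_apply y n).symm.trans (congrFun Ty_eq n)

end BinomialTransform

/-- if `x` is an inverse invariant sequence of the first kind, then
`y = (J(-1) + J(0)) x`, i.e. `y n = 2 x (n+1) - x n`, is an invariant sequence of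
the first kind. -/
theorem stmt13 (x : ℕ → ℝ)
    (hx : ∀ n, ∑ k ∈ Finset.range (n + 1), (Nat.choose n k : ℝ) * (-1) ^ k * x k = -x n)
    (y : ℕ → ℝ) (hy : ∀ n, y n = 2 * x (n + 1) - x n) :
    ∀ n, ∑ k ∈ Finset.range (n + 1), (Nat.choose n k : ℝ) * (-1) ^ k * y k = y n :=
  stmt13_general (R := ℝ) x hx y hy
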